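/- Fix k ≥ 3 and set C_k := e^{k/2+2} · k^{(k+1)/2} / k!. For each n, let D(n) ≥ 1 be an integer, δ(n) ∈ (0,1], and m(n) ≤ binom(n,k) a positive integer; set p(n) := m(n)/binom(n,k). Let Q_n be the null model and P_n the mixture planted Bernoulli model on z ∈ {0,±1}^{binom([n],k)}. If m(n)·δ(n)²·C_k·D(n)^{k/2−1} / n^{k/2} → 0 as n → ∞, then for every sequence f_n of real polynomials in the coordinates (z(α)) of total degree at most D(n) with Var_{Q_n}(f_n) > 0, one has (E_{P_n}[f_n] − E_{Q_n}[f_n]) / sqrt(Var_{Q_n}(f_n)) → 0 as n → ∞. Moreover, if D(n) = D is a fixed constant and m(n)·δ(n)²·C_k·D^{k/2−1} / n^{k/2} is bounded above by a constant, then the quantity (E_{P_n}[f_n] − E_{Q_n}[f_n]) / sqrt(Var_{Q_n}(f_n)) is bounded uniformly over n and over all such polynomial sequences. -/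

import Mathlib

open Finset

/-- The index set of `k`-element subsets of `[n]`, used to index the coordinates of an
observation `z ∈ {0,±1}^{binom([n],k)}`. -/
abbrev KSet (n k : ℕ) := {α : Finset (Fin n) // α.card = k}

/-- Coordinate weights under the null model `Q`: value `0` with probability `1−p`,
values `+1` and `−1` each with probability `p/2`. -/
noncomputable def qWeight (p : ℝ) : Fin 3 → ℝ := ![1 - p, p / 2, p / 2]

/-- Coordinate weights under the planted model `P_x`: the coordinate is `0` with probability
`1−p`, equals `x_α` with probability `p(1+δ)/2` and `−x_α` with probability `p(1−δ)/2`. -/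
noncomputable def pWeight (p δ : ℝ) : Fin 3 → ℝ := ![1 - p, p * (1 + δ) / 2, p * (1 - δ) / 2]

/-- Realized coordinate values under the null model. -/
noncomputable def qVal : Fin 3 → ℝ := ![0, 1, -1]

/-- Realized coordinate values under the planted model: `0`, `x_α`, `−x_α`,
where `x_α = ∏_{i∈α} x_i`. -/
noncomputable def pVal {n k : ℕ} (x : Fin n → ℝ) (α : KSet n k) : Fin 3 → ℝ :=
  ![0, ∏ i ∈ α.1, x i, -∏ i ∈ α.1, x i]

/-- Expectation of a statistic `F` of the observation `z` under the null (Bernoulli) model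
`Q`, in which the coordinates `z(α)` are independent with law given by `qWeight p`. -/
noncomputable def expQ (n k : ℕ) (p : ℝ) (F : (KSet n k → ℝ) → ℝ) : ℝ :=
  ∑ ω : KSet n k → Fin 3, (∏ α : KSet n k, qWeight p (ω α)) * F (fun α => qVal (ω α))

/-- Expectation of a statistic `F` of the observation `z` under the planted Bernoulli model
`P_x`, in which the coordinates `z(α) = b_α x_α ξ_α` are independent. -/
noncomputable def expP (n k : ℕ) (p δ : ℝ) (x : Fin n → ℝ) (F : (KSet n k → ℝ) → ℝ) : ℝ :=
  ∑ ω : KSet n k → Fin 3, (∏ α : KSet n k, pWeight p δ (ω α)) * F (fun α => pVal x α (ω α))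

/-- Expectation under the mixture planted model `P`: average of `E_{P_x}` over a uniformly
random hidden assignment `x ∈ {±1}^n`. -/
noncomputable def expMix (n k : ℕ) (p δ : ℝ) (F : (KSet n k → ℝ) → ℝ) : ℝ :=
  ((2 : ℝ) ^ n)⁻¹ *
    ∑ b : Fin n → Bool, expP n k p δ (fun i => if b i then 1 else -1) F

/-- The constant `C_k = e^{k/2+2} k^{(k+1)/2} / k!`. -/
noncomputable def Ck (k : ℕ) : ℝ :=
  Real.exp ((k : ℝ) / 2 + 2) * (k : ℝ) ^ (((k : ℝ) + 1) / 2) / (k.factorial : ℝ)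

/-- The variance of a polynomial test `f` in the coordinates of `z` under the null model. -/
noncomputable def varQ (n k : ℕ) (p : ℝ) (f : MvPolynomial (KSet n k) ℝ) : ℝ :=
  expQ n k p (fun z => (MvPolynomial.eval z f) ^ 2)
    - (expQ n k p (fun z => MvPolynomial.eval z f)) ^ 2

/-- Bernoulli's inequality for the order on a commutative ring with positive cone `P`. -/
theorem add_pow_sub_mem {R : Type*} [CommRing R] (P : Subsemiring R) {a b : R}
    (ha : a ∈ P) (hb : b ∈ P) (d : ℕ) :
    (a + b) ^ (d + 1) - (b ^ (d + 1) + (d + 1 : ℕ) * (a * b ^ d)) ∈ P := by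
  induction d with
  | zero => simp [add_comm]
  | succ d ih =>
    have h := P.add_mem (P.mul_mem (P.add_mem ha hb) ih)
      (P.mul_mem (natCast_mem P (d + 1)) (P.mul_mem (P.mul_mem ha ha) (P.pow_mem hb d)))
    convert h using 1
    push_cast
    ring

theorem sum_pow_sub_factorial_mul_esymm_mem {R ι : Type*} [CommRing R] [DecidableEq ι]
    (P : Subsemiring R) (y : ι → R) (hy : ∀ i, y i ∈ P) (s : Finset ι) (d : ℕ) :
    (∑ i ∈ s, y i) ^ d - (d.factorial : R) * ∑ T ∈ s.powersetCard d, ∏ i ∈ T, y i ∈ P := by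
  induction s using Finset.induction_on generalizing d with
  | empty =>
    cases d with
    | zero => simp
    | succ d => simp [Finset.powersetCard_eq_empty.2 (show (∅ : Finset ι).card < d + 1 by simp)]
  | insert a s ha ih =>
    cases d with
    | zero => simp
    | succ d =>
      have hsum : ∑ i ∈ s, y i ∈ P := P.sum_mem fun i _ => hy i
      have hdis : Disjoint (s.powersetCard (d + 1)) ((s.powersetCard d).image (insert a)) := by
        rw [Finset.disjoint_left]
        intro T hT hT'
        obtain ⟨U, _, rfl⟩ := Finset.mem_image.1 hT'
        exact ha ((Finset.mem_powersetCard.1 hT).1 (Finset.mem_insert_self a U))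
      have hinj : Set.InjOn (insert a) (s.powersetCard d : Set (Finset ι)) := by
        intro T hT U hU h
        have hT' : a ∉ T := fun h => ha ((Finset.mem_powersetCard.1 hT).1 h)
        have hU' : a ∉ U := fun h => ha ((Finset.mem_powersetCard.1 hU).1 h)
        rw [← Finset.erase_insert hT', h, Finset.erase_insert hU']
      have hes : ∑ T ∈ (insert a s).powersetCard (d + 1), ∏ i ∈ T, y i
          = ∑ T ∈ s.powersetCard (d + 1), ∏ i ∈ T, y i
            + y a * ∑ T ∈ s.powersetCard d, ∏ i ∈ T, y i := by
        rw [Finset.powersetCard_succ_insert ha, Finset.sum_union hdis, Finset.sum_image hinj,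
          Finset.mul_sum]
        congr 1
        refine Finset.sum_congr rfl fun T hT => ?_
        exact Finset.prod_insert fun h => ha ((Finset.mem_powersetCard.1 hT).1 h)
      rw [hes, Finset.sum_insert ha]
      have h := P.add_mem (P.add_mem (add_pow_sub_mem P (hy a) hsum d) (ih (d + 1)))
        (P.mul_mem (natCast_mem P (d + 1)) (P.mul_mem (hy a) (ih d)))
      convert h using 1
      rw [Nat.factorial_succ]
      push_cast
      ring

theorem pow_sub_pow_mem {R : Type*} [CommRing R] (P : Subsemiring R) {a b : R}
    (ha : a ∈ P) (hb : b ∈ P) (h : b - a ∈ P) (d : ℕ) : b ^ d - a ^ d ∈ P := by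
  induction d with
  | zero => simp
  | succ d ih =>
    convert P.add_mem (P.mul_mem ih hb) (P.mul_mem (P.pow_mem ha d) h) using 1
    ring

/-- The `±1`-valued vector encoded by a Boolean vector. -/
noncomputable def signVec {n : ℕ} (b : Fin n → Bool) (i : Fin n) : ℝ := if b i then 1 else -1

theorem signVec_eq_or {n : ℕ} (b : Fin n → Bool) (i : Fin n) :
    signVec b i = 1 ∨ signVec b i = -1 := by
  unfold signVec; split <;> simp

/-- Functions on the cube that are combinations, with natural coefficients, of monomials in the
coordinate signs. -/
def signCone (n : ℕ) : Subsemiring ((Fin n → Bool) → ℝ) :=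
  Subsemiring.closure (Set.range fun i b => signVec b i)

theorem sum_prod_signVec {n : ℕ} (g : Fin n → ℝ → ℝ) :
    ∑ b : Fin n → Bool, ∏ i, g i (signVec b i) = ∏ i, (g i 1 + g i (-1)) := by
  have h := Finset.prod_univ_sum (fun _ : Fin n => (Finset.univ : Finset Bool))
    (fun i c => g i (if c then 1 else -1))
  simp only [Fintype.piFinset_univ, Fintype.sum_bool] at h
  simpa [signVec] using h.symm

theorem sum_nonneg_of_mem_signCone {n : ℕ} {F : (Fin n → Bool) → ℝ} (hF : F ∈ signCone n) :
    0 ≤ ∑ b, F b := by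
  rw [signCone, Subsemiring.mem_closure_iff] at hF
  induction hF using AddSubmonoid.closure_induction with
  | zero => simp
  | add F G _ _ hF hG =>
    simpa [Finset.sum_add_distrib] using add_nonneg hF hG
  | mem F hF =>
    obtain ⟨e, rfl⟩ : ∃ e : Fin n → ℕ, F = fun b => ∏ i, signVec b i ^ e i := by
      induction hF using Submonoid.closure_induction with
      | one => exact ⟨0, by ext; simp⟩
      | mul F G _ _ hF hG =>
        obtain ⟨e, rfl⟩ := hF
        obtain ⟨e', rfl⟩ := hG
        exact ⟨e + e', by ext; simp [pow_add, Finset.prod_mul_distrib]⟩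
      | mem F hF =>
        obtain ⟨i, rfl⟩ := hF
        refine ⟨Pi.single i 1, ?_⟩
        ext b
        simp only [Pi.single_apply, pow_ite, pow_one, pow_zero, Finset.prod_ite_eq',
          Finset.mem_univ, if_true]
    rw [sum_prod_signVec fun i t => t ^ e i]
    refine Finset.prod_nonneg fun i _ => ?_
    rcases neg_one_pow_eq_or ℝ (e i) with h | h <;> simp [h]

/-- The mean of `∏_{α ∈ S} x_α` over a uniform sign vector `x`. -/
noncomputable def parityMean {n k : ℕ} (S : Finset (KSet n k)) : ℝ :=
  ((2 : ℝ) ^ n)⁻¹ * ∑ b : Fin n → Bool, ∏ α ∈ S, ∏ i ∈ α.1, signVec b i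

theorem signVec_mem_signCone {n : ℕ} (i : Fin n) : (fun b => signVec b i) ∈ signCone n :=
  Subsemiring.subset_closure ⟨i, rfl⟩

theorem prod_signVec_mem_signCone {n : ℕ} (A : Finset (Fin n)) :
    (∏ i ∈ A, fun b : Fin n → Bool => signVec b i) ∈ signCone n :=
  Subsemiring.prod_mem _ fun i _ => signVec_mem_signCone i

theorem parityMean_nonneg {n k : ℕ} (S : Finset (KSet n k)) : 0 ≤ parityMean S := by
  refine mul_nonneg (by positivity) ?_
  have h := sum_nonneg_of_mem_signCone
    (Subsemiring.prod_mem (signCone n) fun α (_ : α ∈ S) => prod_signVec_mem_signCone α.1)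
  simpa using h

theorem abs_signVec {n : ℕ} (b : Fin n → Bool) (i : Fin n) : |signVec b i| = 1 := by
  rcases signVec_eq_or b i with h | h <;> simp [h]

theorem parityMean_le_one {n k : ℕ} (S : Finset (KSet n k)) : parityMean S ≤ 1 := by
  have h : ∑ b : Fin n → Bool, ∏ α ∈ S, ∏ i ∈ α.1, signVec b i
      ≤ ∑ _b : Fin n → Bool, (1 : ℝ) := by
    refine Finset.sum_le_sum fun b _ => (le_abs_self _).trans ?_
    simp [Finset.abs_prod, abs_signVec]
  have h2 : ∑ _b : Fin n → Bool, (1 : ℝ) = 2 ^ n := by simp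
  rw [h2] at h
  unfold parityMean
  rw [inv_mul_le_iff₀ (by positivity)]
  simpa using h

/-- Counting even `k`-uniform hypergraphs with `d` edges by a moment of a random walk. -/
theorem factorial_mul_sum_parityMean_le (n k d : ℕ) :
    (d.factorial : ℝ) * ∑ S ∈ (Finset.univ : Finset (KSet n k)).powersetCard d, parityMean S
      ≤ ((2 : ℝ) ^ n)⁻¹ * ∑ b : Fin n → Bool, (∑ i, signVec b i) ^ (k * d) := by
  set P := signCone n
  let x : Fin n → (Fin n → Bool) → ℝ := fun i b => signVec b i
  let y : KSet n k → (Fin n → Bool) → ℝ := fun α => ∏ i ∈ α.1, x i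
  have hx : ∀ i, x i ∈ P := signVec_mem_signCone
  have hy : ∀ α, y α ∈ P := fun α => prod_signVec_mem_signCone α.1
  have hYP : ∑ α, y α ∈ P := P.sum_mem fun α _ => hy α
  have hY : ∑ α, y α = ∑ T ∈ (Finset.univ : Finset (Fin n)).powersetCard k, ∏ i ∈ T, x i :=
    (Finset.sum_subtype _ (by simp [Finset.mem_powersetCard])
      (fun T : Finset (Fin n) => ∏ i ∈ T, x i)).symm
  have h1 : (∑ i, x i) ^ k - ∑ α, y α ∈ P := by
    have h := sum_pow_sub_factorial_mul_esymm_mem P x hx Finset.univ k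
    rw [← hY] at h
    have h' := P.add_mem h (P.mul_mem (natCast_mem P (k.factorial - 1)) hYP)
    convert h' using 1
    rw [Nat.cast_sub (Nat.factorial_pos k)]
    push_cast
    ring
  have h2 := pow_sub_pow_mem P hYP (P.pow_mem (P.sum_mem fun i _ => hx i) k) h1 d
  have h3 := P.add_mem h2 (sum_pow_sub_factorial_mul_esymm_mem P y hy Finset.univ d)
  have h4 := sum_nonneg_of_mem_signCone h3
  have h5 : (d.factorial : ℝ) * ∑ b : Fin n → Bool,
      ∑ S ∈ (Finset.univ : Finset (KSet n k)).powersetCard d, ∏ α ∈ S, ∏ i ∈ α.1, signVec b i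
      ≤ ∑ b : Fin n → Bool, (∑ i, signVec b i) ^ (k * d) := by
    rw [Finset.mul_sum, ← sub_nonneg, ← Finset.sum_sub_distrib]
    convert h4 using 2 with b
    simp [x, y, pow_mul]
  unfold parityMean
  rw [← Finset.mul_sum, mul_left_comm, Finset.sum_comm]
  exact mul_le_mul_of_nonneg_left h5 (by positivity)

theorem mean_pow_sum_signVec_le (n s : ℕ) (t : ℝ) (ht : 0 < t) :
    ((2 : ℝ) ^ n)⁻¹ * ∑ b : Fin n → Bool, (∑ i, signVec b i) ^ s
      ≤ 2 * s.factorial * Real.exp (n * (t ^ 2 / 2)) / t ^ s := by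
  have hexp : ∀ u : ℝ, ∑ b : Fin n → Bool, Real.exp (u * ∑ i, signVec b i)
      ≤ 2 ^ n * Real.exp (n * (u ^ 2 / 2)) := by
    intro u
    have h := sum_prod_signVec (fun (_ : Fin n) r => Real.exp (u * r))
    simp only [← Real.exp_sum, ← Finset.mul_sum] at h
    rw [h, Finset.prod_const, Finset.card_univ, Fintype.card_fin]
    have h2 : Real.exp (u * 1) + Real.exp (u * -1) = 2 * Real.cosh u := by
      rw [Real.cosh_eq]; ring_nf
    rw [h2, mul_pow, Real.exp_nat_mul]
    gcongr
    exact Real.cosh_le_exp_half_sq u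
  have hpt : ∀ X : ℝ, X ^ s ≤ s.factorial / t ^ s * (Real.exp (t * X) + Real.exp (-t * X)) := by
    intro X
    have h1 : (t * |X|) ^ s / s.factorial ≤ Real.exp (t * |X|) :=
      Real.pow_div_factorial_le_exp _ (by positivity) s
    have h2 : Real.exp (t * |X|) ≤ Real.exp (t * X) + Real.exp (-t * X) := by
      rcases abs_cases X with ⟨h, _⟩ | ⟨h, _⟩ <;> rw [h]
      · linarith [Real.exp_pos (-t * X)]
      · rw [mul_neg, ← neg_mul]; linarith [Real.exp_pos (t * X)]
    calc X ^ s ≤ |X| ^ s := (le_abs_self _).trans_eq (abs_pow X s)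
      _ = s.factorial / t ^ s * ((t * |X|) ^ s / s.factorial) := by
        rw [mul_pow]; field_simp
      _ ≤ _ := mul_le_mul_of_nonneg_left (h1.trans h2) (by positivity)
  rw [inv_mul_le_iff₀ (by positivity)]
  calc ∑ b : Fin n → Bool, (∑ i, signVec b i) ^ s
      ≤ ∑ b : Fin n → Bool, s.factorial / t ^ s *
          (Real.exp (t * ∑ i, signVec b i) + Real.exp (-t * ∑ i, signVec b i)) :=
        Finset.sum_le_sum fun b _ => hpt _
    _ = s.factorial / t ^ s * (∑ b : Fin n → Bool, Real.exp (t * ∑ i, signVec b i)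
          + ∑ b : Fin n → Bool, Real.exp (-t * ∑ i, signVec b i)) := by
        rw [← Finset.mul_sum, Finset.sum_add_distrib]
    _ ≤ s.factorial / t ^ s * (2 ^ n * Real.exp (n * (t ^ 2 / 2))
          + 2 ^ n * Real.exp (n * ((-t) ^ 2 / 2))) := by
        gcongr <;> exact hexp _
    _ = _ := by rw [neg_sq]; ring

section Expectation

variable {n k : ℕ} {p δ : ℝ}

theorem expQ_sum {ι : Type*} (s : Finset ι) (c : ι → ℝ) (F : ι → (KSet n k → ℝ) → ℝ) :
    expQ n k p (fun z => ∑ i ∈ s, c i * F i z) = ∑ i ∈ s, c i * expQ n k p (F i) := by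
  simp only [expQ, Finset.mul_sum]
  rw [Finset.sum_comm]
  exact Finset.sum_congr rfl fun i _ => Finset.sum_congr rfl fun ω _ => by ring

theorem expP_sum {ι : Type*} (x : Fin n → ℝ) (s : Finset ι) (c : ι → ℝ)
    (F : ι → (KSet n k → ℝ) → ℝ) :
    expP n k p δ x (fun z => ∑ i ∈ s, c i * F i z) = ∑ i ∈ s, c i * expP n k p δ x (F i) := by
  simp only [expP, Finset.mul_sum]
  rw [Finset.sum_comm]
  exact Finset.sum_congr rfl fun i _ => Finset.sum_congr rfl fun ω _ => by ring

theorem expQ_add (F G : (KSet n k → ℝ) → ℝ) :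
    expQ n k p (fun z => F z + G z) = expQ n k p F + expQ n k p G := by
  simp only [expQ, mul_add, Finset.sum_add_distrib]

theorem expQ_const_mul (c : ℝ) (F : (KSet n k → ℝ) → ℝ) :
    expQ n k p (fun z => c * F z) = c * expQ n k p F := by
  simpa using expQ_sum (p := p) {()} (fun _ => c) fun _ => F

/-- Independence of the coordinates under the null model. -/
theorem expQ_prod (g : KSet n k → ℝ → ℝ) :
    expQ n k p (fun z => ∏ α, g α (z α)) = ∏ α, ∑ j, qWeight p j * g α (qVal j) := by
  rw [Finset.prod_univ_sum]
  simp [expQ, Finset.prod_mul_distrib]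

theorem expP_prod (x : Fin n → ℝ) (g : KSet n k → ℝ → ℝ) :
    expP n k p δ x (fun z => ∏ α, g α (z α))
      = ∏ α, ∑ j, pWeight p δ j * g α (pVal x α j) := by
  rw [Finset.prod_univ_sum]
  simp [expP, Finset.prod_mul_distrib]

theorem expQ_one : expQ n k p (fun _ => 1) = 1 := by
  have h := expQ_prod (n := n) (k := k) (p := p) (fun _ _ => 1)
  simp only [Finset.prod_const_one] at h
  rw [h]
  refine Finset.prod_eq_one fun α _ => ?_
  simp only [qWeight, Fin.sum_univ_three, Matrix.cons_val]
  ring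

/-- Change of measure from the planted to the null model, for monomials. -/
theorem expP_monomial (x : Fin n → ℝ) (hx : ∀ i, x i = 1 ∨ x i = -1) (e : KSet n k → ℕ) :
    expP n k p δ x (fun z => ∏ α, z α ^ e α)
      = expQ n k p (fun z => (∏ α, (1 + δ * (∏ i ∈ α.1, x i) * z α)) * ∏ α, z α ^ e α) := by
  simp only [← Finset.prod_mul_distrib]
  rw [expP_prod x fun α t => t ^ e α,
    expQ_prod fun α t => (1 + δ * (∏ i ∈ α.1, x i) * t) * t ^ e α]
  refine Finset.prod_congr rfl fun α _ => ?_
  have hα : ∏ i ∈ α.1, x i = 1 ∨ ∏ i ∈ α.1, x i = -1 := by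
    refine Finset.prod_induction _ (fun t : ℝ => t = 1 ∨ t = -1) ?_ (Or.inl rfl) fun i _ => hx i
    rintro a b (rfl | rfl) (rfl | rfl) <;> simp
  rcases hα with h | h <;>
    simp [Fin.sum_univ_three, qWeight, pWeight, qVal, pVal, h] <;> ring

theorem expP_eval (x : Fin n → ℝ) (hx : ∀ i, x i = 1 ∨ x i = -1)
    (f : MvPolynomial (KSet n k) ℝ) :
    expP n k p δ x (fun z => MvPolynomial.eval z f)
      = ∑ S : Finset (KSet n k), δ ^ S.card * (∏ α ∈ S, ∏ i ∈ α.1, x i)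
          * expQ n k p (fun z => (∏ α ∈ S, z α) * MvPolynomial.eval z f) := by
  have h : expP n k p δ x (fun z => MvPolynomial.eval z f)
      = expQ n k p (fun z => (∏ α, (1 + δ * (∏ i ∈ α.1, x i) * z α))
          * MvPolynomial.eval z f) := by
    simp only [MvPolynomial.eval_eq', Finset.mul_sum, mul_left_comm _ (MvPolynomial.coeff _ f)]
    rw [expP_sum x f.support (fun e => f.coeff e) fun e z => ∏ α, z α ^ e α,
      expQ_sum f.support (fun e => f.coeff e)]
    exact Finset.sum_congr rfl fun e _ => by rw [expP_monomial x hx]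
  rw [h, ← expQ_sum Finset.univ (fun S : Finset (KSet n k) =>
    δ ^ S.card * (∏ α ∈ S, ∏ i ∈ α.1, x i))]
  congr 1
  ext z
  rw [Finset.prod_one_add, Finset.powerset_univ, Finset.sum_mul]
  refine Finset.sum_congr rfl fun S _ => ?_
  rw [Finset.prod_mul_distrib, Finset.prod_mul_distrib, Finset.prod_const]
  ring

theorem expMix_eval (f : MvPolynomial (KSet n k) ℝ) :
    expMix n k p δ (fun z => MvPolynomial.eval z f)
      = ∑ S : Finset (KSet n k), δ ^ S.card * parityMean S
          * expQ n k p (fun z => (∏ α ∈ S, z α) * MvPolynomial.eval z f) := by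
  have h : ∀ b : Fin n → Bool, expP n k p δ (fun i => if b i then 1 else -1)
      (fun z => MvPolynomial.eval z f) = _ := fun b => expP_eval (signVec b) (signVec_eq_or b) f
  simp only [expMix, h, parityMean]
  rw [Finset.sum_comm, Finset.mul_sum]
  refine Finset.sum_congr rfl fun S _ => ?_
  rw [← Finset.sum_mul, ← Finset.mul_sum]
  ring

/-- A product of more coordinates than the degree of `f` is uncorrelated with `f`. -/
theorem expQ_prod_mul_eval_eq_zero (f : MvPolynomial (KSet n k) ℝ) (S : Finset (KSet n k))
    (hS : f.totalDegree < S.card) :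
    expQ n k p (fun z => (∏ α ∈ S, z α) * MvPolynomial.eval z f) = 0 := by
  classical
  simp only [MvPolynomial.eval_eq', Finset.mul_sum, mul_left_comm _ (MvPolynomial.coeff _ f)]
  rw [expQ_sum f.support (fun e => f.coeff e)]
  refine Finset.sum_eq_zero fun e he => mul_eq_zero_of_right _ ?_
  obtain ⟨α, hα, hα0⟩ : ∃ α ∈ S, e α = 0 := by
    by_contra! hne
    have h1 : S ⊆ e.support := fun α hα => Finsupp.mem_support_iff.2 (hne α hα)
    have h2 : e.support.card ≤ e.sum fun _ j => j := by
      rw [Finsupp.sum, Finset.card_eq_sum_ones]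
      exact Finset.sum_le_sum fun α hα => Nat.one_le_iff_ne_zero.2 (Finsupp.mem_support_iff.1 hα)
    have := MvPolynomial.le_totalDegree he
    have := Finset.card_le_card h1
    omega
  have hprod : ∀ z : KSet n k → ℝ, (∏ α ∈ S, z α) * ∏ α, z α ^ e α
      = ∏ α, (if α ∈ S then z α else 1) * z α ^ e α := by
    intro z
    rw [Finset.prod_mul_distrib, Finset.prod_ite_mem, Finset.univ_inter]
  simp only [hprod]
  rw [expQ_prod fun α t => (if α ∈ S then t else 1) * t ^ e α]
  refine Finset.prod_eq_zero (Finset.mem_univ α) ?_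
  simp [hα, hα0, Fin.sum_univ_three, qWeight, qVal]

theorem expQ_prod_mul_prod [DecidableEq (KSet n k)] (S T : Finset (KSet n k)) :
    expQ n k p (fun z => (∏ α ∈ S, z α) * ∏ α ∈ T, z α) = if S = T then p ^ S.card else 0 := by
  have hprod : ∀ z : KSet n k → ℝ, (∏ α ∈ S, z α) * ∏ α ∈ T, z α
      = ∏ α, (if α ∈ S then z α else 1) * (if α ∈ T then z α else 1) := by
    intro z
    rw [Finset.prod_mul_distrib, Finset.prod_ite_mem, Finset.prod_ite_mem, Finset.univ_inter,
      Finset.univ_inter]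
  simp only [hprod]
  rw [expQ_prod fun α t => (if α ∈ S then t else 1) * (if α ∈ T then t else 1)]
  split_ifs with h
  · subst h
    rw [← Finset.prod_const, ← Finset.univ_inter S, ← Finset.prod_ite_mem]
    refine Finset.prod_congr rfl fun α _ => ?_
    by_cases hα : α ∈ S <;> simp [hα, Fin.sum_univ_three, qWeight, qVal]
    ring
  · obtain ⟨α, hα⟩ : ∃ α, ¬ (α ∈ S ↔ α ∈ T) := by
      by_contra! hne
      exact h (Finset.ext hne)
    refine Finset.prod_eq_zero (Finset.mem_univ α) ?_
    by_cases h1 : α ∈ S <;> by_cases h2 : α ∈ T <;>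
      simp [h1, h2, Fin.sum_univ_three, qWeight, qVal] at hα ⊢

theorem expQ_mul_sq_le (hp0 : 0 ≤ p) (hp1 : p ≤ 1) (F G : (KSet n k → ℝ) → ℝ) :
    expQ n k p (fun z => F z * G z) ^ 2
      ≤ expQ n k p (fun z => F z ^ 2) * expQ n k p (fun z => G z ^ 2) := by
  have hw : ∀ ω : KSet n k → Fin 3, 0 ≤ ∏ α, qWeight p (ω α) := fun ω =>
    Finset.prod_nonneg fun α _ => by
      generalize ω α = j
      fin_cases j <;> simp [qWeight] <;> linarith
  refine Finset.sum_sq_le_sum_mul_sum_of_sq_le_mul _ (fun ω _ => mul_nonneg (hw ω) (sq_nonneg _))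
    (fun ω _ => mul_nonneg (hw ω) (sq_nonneg _)) fun ω _ => le_of_eq (by ring)

/-- The squared advantage of a degree-`D` test is at most the degree-`D` part of the chi-square
divergence times the variance of the test. -/
theorem advantage_sq_le (hp0 : 0 ≤ p) (hp1 : p ≤ 1) (D : ℕ) (f : MvPolynomial (KSet n k) ℝ)
    (hf : f.totalDegree ≤ D) :
    (expMix n k p δ (fun z => MvPolynomial.eval z f)
        - expQ n k p (fun z => MvPolynomial.eval z f)) ^ 2
      ≤ (∑ d ∈ Finset.Icc 1 D, (δ ^ 2 * p) ^ d *
          ∑ S ∈ (Finset.univ : Finset (KSet n k)).powersetCard d, parityMean S) * varQ n k p f := by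
  classical
  set A : Finset (Finset (KSet n k)) := Finset.univ.filter fun S => S.card ∈ Finset.Icc 1 D
  set c : Finset (KSet n k) → ℝ := fun S => δ ^ S.card * parityMean S
  set L : (KSet n k → ℝ) → ℝ := fun z => ∑ S ∈ A, c S * ∏ α ∈ S, z α
  set μ := expQ n k p (fun z => MvPolynomial.eval z f) with hμ
  have hadv : expMix n k p δ (fun z => MvPolynomial.eval z f) - μ
      = expQ n k p (fun z => L z * MvPolynomial.eval z f) := by
    have h0 : parityMean (∅ : Finset (KSet n k)) = 1 := by simp [parityMean]
    have hL : expQ n k p (fun z => L z * MvPolynomial.eval z f)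
        = ∑ S ∈ A, c S * expQ n k p (fun z => (∏ α ∈ S, z α) * MvPolynomial.eval z f) := by
      rw [← expQ_sum]
      simp only [L, Finset.sum_mul, mul_assoc]
    have hA : A ⊆ Finset.univ.erase ∅ := fun S hS => by
      have := (Finset.mem_Icc.1 (Finset.mem_filter.1 hS).2).1
      simpa using (Finset.card_pos.1 this).ne_empty
    rw [hL, expMix_eval, ← Finset.add_sum_erase _ _ (Finset.mem_univ (∅ : Finset (KSet n k))),
      Finset.sum_subset hA]
    · simp [h0, hμ, c]
    · intro S hS hSA
      have hpos : 1 ≤ S.card := Finset.card_pos.2 (Finset.nonempty_iff_ne_empty.2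
        (Finset.ne_of_mem_erase hS))
      have : D < S.card := by
        by_contra! hle
        exact hSA (Finset.mem_filter.2 ⟨Finset.mem_univ S, Finset.mem_Icc.2 ⟨hpos, hle⟩⟩)
      rw [expQ_prod_mul_eval_eq_zero f S (by omega), mul_zero]
  have hL0 : expQ n k p L = 0 := by
    rw [expQ_sum]
    refine Finset.sum_eq_zero fun S hS => mul_eq_zero_of_right _ ?_
    have h := expQ_prod_mul_prod (p := p) S ∅
    have hne : S ≠ ∅ := by
      rintro rfl
      simp [A] at hS
    simpa [hne] using h
  have hcent : expQ n k p (fun z => L z * (MvPolynomial.eval z f - μ))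
      = expQ n k p (fun z => L z * MvPolynomial.eval z f) := by
    have h := expQ_add (p := p) (fun z => L z * MvPolynomial.eval z f) fun z => -μ * L z
    rw [expQ_const_mul, hL0, mul_zero, add_zero] at h
    rw [← h]
    congr 1
    ext z
    ring
  have hvar : expQ n k p (fun z => (MvPolynomial.eval z f - μ) ^ 2) = varQ n k p f := by
    have h := expQ_add (p := p) (fun z => MvPolynomial.eval z f ^ 2)
      fun z => -2 * μ * MvPolynomial.eval z f + μ ^ 2 * 1
    rw [expQ_add (fun z => -2 * μ * MvPolynomial.eval z f), expQ_const_mul, expQ_const_mul,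
      expQ_one, ← hμ] at h
    rw [varQ, ← hμ]
    convert h using 1
    · congr 1
      ext z
      ring
    · ring
  have hLsq : expQ n k p (fun z => L z ^ 2) = ∑ S ∈ A, c S ^ 2 * p ^ S.card := by
    have h : ∀ z, L z ^ 2 = ∑ S ∈ A, c S * ∑ T ∈ A, c T * ((∏ α ∈ S, z α) * ∏ α ∈ T, z α) := by
      intro z
      rw [sq]
      simp only [L]
      rw [Finset.sum_mul_sum]
      simp only [Finset.mul_sum]
      exact Finset.sum_congr rfl fun S _ => Finset.sum_congr rfl fun T _ => by ring
    simp only [h]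
    rw [expQ_sum]
    refine Finset.sum_congr rfl fun S hS => ?_
    rw [expQ_sum]
    simp only [expQ_prod_mul_prod, mul_ite, mul_zero, Finset.sum_ite_eq, hS, if_true]
    ring
  have hLle : ∑ S ∈ A, c S ^ 2 * p ^ S.card ≤ ∑ d ∈ Finset.Icc 1 D, (δ ^ 2 * p) ^ d *
      ∑ S ∈ (Finset.univ : Finset (KSet n k)).powersetCard d, parityMean S := by
    rw [← Finset.sum_fiberwise_of_maps_to (g := Finset.card) (t := Finset.Icc 1 D)
      fun S hS => (Finset.mem_filter.1 hS).2]
    refine Finset.sum_le_sum fun d hd => ?_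
    have hfib : A.filter (fun S => S.card = d) = Finset.univ.powersetCard d := by
      ext S
      simp only [A, Finset.mem_filter, Finset.mem_univ, true_and, Finset.mem_powersetCard,
        Finset.subset_univ]
      exact ⟨fun h => h.2, fun h => ⟨h ▸ hd, h⟩⟩
    rw [hfib, Finset.mul_sum]
    refine Finset.sum_le_sum fun S hS => ?_
    rw [(Finset.mem_powersetCard.1 hS).2.symm]
    have hw : parityMean S ^ 2 ≤ parityMean S := by
      nlinarith [parityMean_nonneg S, parityMean_le_one S]
    calc c S ^ 2 * p ^ S.card = (δ ^ 2 * p) ^ S.card * parityMean S ^ 2 := by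
          simp only [c]; ring
      _ ≤ _ := by gcongr
  rw [hadv, ← hcent]
  calc _ ≤ _ := expQ_mul_sq_le hp0 hp1 L fun z => MvPolynomial.eval z f - μ
    _ ≤ _ := by
      have hv : 0 ≤ varQ n k p f := by
        rw [← hvar]
        have h := expQ_mul_sq_le (n := n) (k := k) hp0 hp1 (fun _ => 1)
          (fun z => MvPolynomial.eval z f - μ)
        simp only [one_pow, expQ_one, one_mul] at h
        exact (sq_nonneg _).trans h
      rw [hvar, hLsq]
      exact mul_le_mul_of_nonneg_right hLle hv

end Expectation

theorem Ck_pos {k : ℕ} (hk : 0 < k) : 0 < Ck k := by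
  unfold Ck
  positivity

theorem pow_le_pow_mul_factorial_mul_choose {n k : ℕ} (hk : 0 < k) (hkn : k ≤ n) :
    n ^ k ≤ k ^ k * k.factorial * n.choose k := by
  have h1 : n ≤ k * (n + 1 - k) := by
    obtain ⟨j, rfl⟩ := Nat.exists_eq_add_of_le hkn
    rw [show k + j + 1 - k = j + 1 by omega]
    nlinarith
  calc n ^ k ≤ (k * (n + 1 - k)) ^ k := Nat.pow_le_pow_left h1 k
    _ = k ^ k * (n + 1 - k) ^ k := mul_pow _ _ _
    _ ≤ k ^ k * n.descFactorial k := Nat.mul_le_mul_left _ (Nat.pow_sub_le_descFactorial n k)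
    _ = _ := by rw [Nat.descFactorial_eq_factorial_mul_choose, mul_assoc]

theorem sum_parityMean_le {n k d : ℕ} (hn : 0 < n) (hk : 0 < k) (hd : 0 < d) :
    ∑ S ∈ (Finset.univ : Finset (KSet n k)).powersetCard d, parityMean S
      ≤ 2 * (Real.exp ((k : ℝ) / 2 + 1) * (k : ℝ) ^ ((k : ℝ) / 2)
          * (d : ℝ) ^ ((k : ℝ) / 2 - 1) * (n : ℝ) ^ ((k : ℝ) / 2)) ^ d := by
  have hn' : (0 : ℝ) < n := by exact_mod_cast hn
  have hk' : (0 : ℝ) < k := by exact_mod_cast hk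
  have hd' : (0 : ℝ) < d := by exact_mod_cast hd
  set s := k * d with hs
  have hs' : (s : ℝ) = k * d := by rw [hs]; push_cast; ring
  have hspos : (0 : ℝ) < s := by rw [hs']; positivity
  set t : ℝ := Real.sqrt (s / n) with ht
  have htpos : 0 < t := Real.sqrt_pos.2 (by positivity)
  have ht2 : t ^ 2 = s / n := Real.sq_sqrt (by positivity)
  have h := (factorial_mul_sum_parityMean_le n k d).trans
    (mean_pow_sum_signVec_le n s t htpos)
  have hexp : (n : ℝ) * (t ^ 2 / 2) = s * (1 / 2) := by rw [ht2]; field_simp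
  have hst : (s : ℝ) / t = Real.sqrt (k * d * n) := by
    rw [div_eq_iff htpos.ne', ht, ← Real.sqrt_mul (by positivity), ← hs',
      show (s : ℝ) * n * (s / n) = s * s by field_simp, Real.sqrt_mul_self hspos.le]
  have hfact : (d : ℝ) ^ d ≤ Real.exp 1 ^ d * d.factorial := by
    have h := Real.pow_div_factorial_le_exp (d : ℝ) hd'.le d
    rw [div_le_iff₀ (by positivity)] at h
    rwa [← Real.exp_nat_mul, mul_one]
  have hsf : (s.factorial : ℝ) ≤ (s : ℝ) ^ s := by exact_mod_cast Nat.factorial_le_pow s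
  set N := ∑ S ∈ (Finset.univ : Finset (KSet n k)).powersetCard d, parityMean S
  have hN0 : 0 ≤ N := Finset.sum_nonneg fun S _ => parityMean_nonneg S
  have hbase : Real.exp 1 * (Real.exp (1 / 2) ^ k * Real.sqrt (k * d * n) ^ k)
      = d * (Real.exp ((k : ℝ) / 2 + 1) * (k : ℝ) ^ ((k : ℝ) / 2)
          * (d : ℝ) ^ ((k : ℝ) / 2 - 1) * (n : ℝ) ^ ((k : ℝ) / 2)) := by
    have h1 : Real.sqrt (k * d * n) ^ k
        = (k : ℝ) ^ ((k : ℝ) / 2) * (d : ℝ) ^ ((k : ℝ) / 2) * (n : ℝ) ^ ((k : ℝ) / 2) := by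
      rw [Real.sqrt_eq_rpow, ← Real.rpow_natCast, ← Real.rpow_mul (by positivity),
        Real.mul_rpow (by positivity) hn'.le, Real.mul_rpow hk'.le hd'.le]
      ring_nf
    have h2 : (d : ℝ) ^ ((k : ℝ) / 2) = d * (d : ℝ) ^ ((k : ℝ) / 2 - 1) := by
      rw [Real.rpow_sub_one hd'.ne']; field_simp
    rw [h1, h2, Real.exp_add, ← Real.exp_nat_mul, show (k : ℝ) * (1 / 2) = k / 2 by ring]
    ring
  have hmain : (d : ℝ) ^ d * N ≤ (d : ℝ) ^ d * (2 * (Real.exp ((k : ℝ) / 2 + 1)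
      * (k : ℝ) ^ ((k : ℝ) / 2) * (d : ℝ) ^ ((k : ℝ) / 2 - 1) * (n : ℝ) ^ ((k : ℝ) / 2)) ^ d) := by
    calc (d : ℝ) ^ d * N ≤ Real.exp 1 ^ d * (d.factorial * N) := by
          rw [← mul_assoc]; gcongr
      _ ≤ Real.exp 1 ^ d * (2 * s.factorial * Real.exp (n * (t ^ 2 / 2)) / t ^ s) := by gcongr
      _ ≤ Real.exp 1 ^ d * (2 * (s : ℝ) ^ s * Real.exp (n * (t ^ 2 / 2)) / t ^ s) := by gcongr
      _ = 2 * (Real.exp 1 * (Real.exp (1 / 2) ^ k * Real.sqrt (k * d * n) ^ k)) ^ d := by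
          rw [hexp, Real.exp_nat_mul, ← hst, mul_pow (Real.exp 1), mul_pow (Real.exp (1 / 2) ^ k),
            ← pow_mul, ← pow_mul, ← hs, div_pow]
          ring
      _ = _ := by rw [hbase, mul_pow]; ring
  exact le_of_mul_le_mul_left hmain (by positivity)

/-- The signal-to-noise ratio controlling the power of degree-`D` tests. -/
noncomputable def signalRatio (n k D m : ℕ) (δ : ℝ) : ℝ :=
  (m : ℝ) * δ ^ 2 * Ck k * (D : ℝ) ^ ((k : ℝ) / 2 - 1) / (n : ℝ) ^ ((k : ℝ) / 2)

/-- A constant, depending only on `k`, comparing `signalRatio` with the chi-square terms. -/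
noncomputable def ratioConst (k : ℕ) : ℝ :=
  (k : ℝ) ^ k * k.factorial * (Real.exp ((k : ℝ) / 2 + 1) * (k : ℝ) ^ ((k : ℝ) / 2)) / Ck k

theorem signalRatio_nonneg {n k D m : ℕ} {δ : ℝ} : 0 ≤ signalRatio n k D m δ := by
  unfold signalRatio Ck
  positivity

theorem ratioConst_nonneg {k : ℕ} : 0 ≤ ratioConst k := by
  unfold ratioConst Ck
  positivity

theorem abs_advantage_le {n k D m : ℕ} {δ : ℝ} (hk : 2 ≤ k) (hkn : k ≤ n)
    (hm : m ≤ n.choose k) (f : MvPolynomial (KSet n k) ℝ) (hf : f.totalDegree ≤ D)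
    (hv : 0 < varQ n k ((m : ℝ) / (n.choose k : ℝ)) f) :
    |(expMix n k ((m : ℝ) / (n.choose k : ℝ)) δ (fun z => MvPolynomial.eval z f)
        - expQ n k ((m : ℝ) / (n.choose k : ℝ)) (fun z => MvPolynomial.eval z f))
      / Real.sqrt (varQ n k ((m : ℝ) / (n.choose k : ℝ)) f)|
      ≤ Real.sqrt (∑ d ∈ Finset.Icc 1 D, 2 * (ratioConst k * signalRatio n k D m δ) ^ d) := by
  have hn' : (0 : ℝ) < n := by exact_mod_cast (by omega : 0 < n)
  have hC : (0 : ℝ) < n.choose k := by exact_mod_cast Nat.choose_pos hkn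
  have hp1 : (m : ℝ) / n.choose k ≤ 1 := (div_le_one hC).2 (by exact_mod_cast hm)
  have hk' : (2 : ℝ) ≤ k := by exact_mod_cast hk
  have hCk := Ck_pos (show 0 < k by omega)
  set p := (m : ℝ) / (n.choose k : ℝ) with hp
  have hp0 : 0 ≤ p := by positivity
  have hple : p ≤ m * ((k : ℝ) ^ k * k.factorial) / (n : ℝ) ^ k := by
    have h : (n : ℝ) ^ k ≤ (k : ℝ) ^ k * k.factorial * n.choose k := by
      exact_mod_cast pow_le_pow_mul_factorial_mul_choose (by omega) hkn
    rw [hp, div_le_div_iff₀ hC (by positivity), mul_assoc]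
    gcongr
  refine Real.abs_le_sqrt ?_
  rw [div_pow, Real.sq_sqrt hv.le, div_le_iff₀ hv]
  refine (advantage_sq_le hp0 hp1 D f hf).trans ?_
  refine mul_le_mul_of_nonneg_right (Finset.sum_le_sum fun d hd => ?_) hv.le
  obtain ⟨hd1, hdD⟩ := Finset.mem_Icc.1 hd
  have hdD' : (d : ℝ) ^ ((k : ℝ) / 2 - 1) ≤ (D : ℝ) ^ ((k : ℝ) / 2 - 1) :=
    Real.rpow_le_rpow (by positivity) (by exact_mod_cast hdD) (by linarith)
  calc (δ ^ 2 * p) ^ d * ∑ S ∈ (Finset.univ : Finset (KSet n k)).powersetCard d, parityMean S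
      ≤ (δ ^ 2 * p) ^ d * (2 * (Real.exp ((k : ℝ) / 2 + 1) * (k : ℝ) ^ ((k : ℝ) / 2)
          * (d : ℝ) ^ ((k : ℝ) / 2 - 1) * (n : ℝ) ^ ((k : ℝ) / 2)) ^ d) := by
        gcongr
        exact sum_parityMean_le (by omega) (by omega) (by omega)
    _ = 2 * (δ ^ 2 * p * (Real.exp ((k : ℝ) / 2 + 1) * (k : ℝ) ^ ((k : ℝ) / 2)
          * (d : ℝ) ^ ((k : ℝ) / 2 - 1) * (n : ℝ) ^ ((k : ℝ) / 2))) ^ d := by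
        rw [mul_pow (δ ^ 2 * p)]; ring
    _ ≤ 2 * (δ ^ 2 * (m * ((k : ℝ) ^ k * k.factorial) / (n : ℝ) ^ k)
          * (Real.exp ((k : ℝ) / 2 + 1) * (k : ℝ) ^ ((k : ℝ) / 2)
          * (D : ℝ) ^ ((k : ℝ) / 2 - 1) * (n : ℝ) ^ ((k : ℝ) / 2))) ^ d := by
        gcongr
    _ = _ := by
        congr 2
        have hnk : (n : ℝ) ^ k = (n : ℝ) ^ ((k : ℝ) / 2) * (n : ℝ) ^ ((k : ℝ) / 2) := by
          rw [← Real.rpow_add hn', add_halves, Real.rpow_natCast]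
        rw [hnk, ratioConst, signalRatio]
        field_simp

theorem varQ_eq_zero_of_lt {n k : ℕ} (h : n < k) (p : ℝ) (f : MvPolynomial (KSet n k) ℝ) :
    varQ n k p f = 0 := by
  have : IsEmpty (KSet n k) := ⟨fun α => by
    have := Finset.card_le_univ α.1
    rw [α.2, Fintype.card_fin] at this
    omega⟩
  simp [varQ, expQ]

theorem sum_Icc_two_mul_pow_le {r : ℝ} (h0 : 0 ≤ r) (h1 : r ≤ 1 / 2) (D : ℕ) :
    ∑ d ∈ Finset.Icc 1 D, 2 * r ^ d ≤ 4 * r := by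
  have h : (∑ d ∈ Finset.Icc 1 D, 2 * r ^ d) * (1 - r) = 2 * r - 2 * r ^ (D + 1) := by
    induction D with
    | zero => simp
    | succ D ih => rw [Finset.sum_Icc_succ_top (by omega), add_mul, ih]; ring
  have hs : 0 ≤ ∑ d ∈ Finset.Icc 1 D, 2 * r ^ d := Finset.sum_nonneg fun d _ => by positivity
  nlinarith [pow_nonneg h0 (D + 1)]

/-- Low-degree hardness: fix `k ≥ 3` and `C_k = e^{k/2+2} k^{(k+1)/2}/k!`.
For sequences `D(n) ≥ 1`, `δ(n) ∈ (0,1]` and positive sample sizes `m(n) ≤ binom(n,k)` with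
`p(n) = m(n)/binom(n,k)`: if `m(n)·δ(n)²·C_k·D(n)^{k/2−1}/n^{k/2} → 0`, then for every
sequence `f_n` of degree-`≤ D(n)` polynomial tests with positive null variance (eventually),
the advantage `(E_P[f_n] − E_Q[f_n]) / sqrt(Var_Q(f_n)) → 0`. Moreover, if `D(n) = D₀` is
constant and `m(n)·δ(n)²·C_k·D₀^{k/2−1}/n^{k/2}` is bounded by a constant, then the
advantage is bounded uniformly over `n` and over all such polynomial tests. -/
theorem stmt18 (k : ℕ) (hk : 3 ≤ k)
    (D : ℕ → ℕ) (δ : ℕ → ℝ) (m : ℕ → ℕ)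
    (hD : ∀ n, 1 ≤ D n) (hδ : ∀ n, 0 < δ n ∧ δ n ≤ 1)
    (hm : ∀ n, 1 ≤ m n) (hmb : ∀ n, k ≤ n → m n ≤ n.choose k) :
    (Filter.Tendsto
        (fun n => (m n : ℝ) * (δ n) ^ 2 * Ck k * ((D n : ℝ)) ^ ((k : ℝ) / 2 - 1)
          / (n : ℝ) ^ ((k : ℝ) / 2)) Filter.atTop (nhds 0) →
      ∀ f : (n : ℕ) → MvPolynomial (KSet n k) ℝ,
        (∀ n, (f n).totalDegree ≤ D n) →
        (∀ᶠ n in Filter.atTop, 0 < varQ n k ((m n : ℝ) / (n.choose k : ℝ)) (f n)) →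
        Filter.Tendsto (fun n =>
          (expMix n k ((m n : ℝ) / (n.choose k : ℝ)) (δ n)
              (fun z => MvPolynomial.eval z (f n))
            - expQ n k ((m n : ℝ) / (n.choose k : ℝ))
              (fun z => MvPolynomial.eval z (f n)))
          / Real.sqrt (varQ n k ((m n : ℝ) / (n.choose k : ℝ)) (f n)))
          Filter.atTop (nhds 0)) ∧
    (∀ D₀ : ℕ, ∀ c : ℝ, (∀ n, D n = D₀) →
      (∀ n : ℕ, 1 ≤ n → (m n : ℝ) * (δ n) ^ 2 * Ck k * ((D₀ : ℝ)) ^ ((k : ℝ) / 2 - 1)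
          / (n : ℝ) ^ ((k : ℝ) / 2) ≤ c) →
      ∃ B : ℝ, ∀ n : ℕ, ∀ f : MvPolynomial (KSet n k) ℝ, f.totalDegree ≤ D₀ →
        0 < varQ n k ((m n : ℝ) / (n.choose k : ℝ)) f →
        |(expMix n k ((m n : ℝ) / (n.choose k : ℝ)) (δ n)
              (fun z => MvPolynomial.eval z f)
            - expQ n k ((m n : ℝ) / (n.choose k : ℝ))
              (fun z => MvPolynomial.eval z f))
          / Real.sqrt (varQ n k ((m n : ℝ) / (n.choose k : ℝ)) f)| ≤ B) := by
  refine ⟨fun hlim f hf hv => ?_, fun D₀ c hDc hc => ?_⟩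
  · change Filter.Tendsto (fun n => signalRatio n k (D n) (m n) (δ n)) _ _ at hlim
    have hr : Filter.Tendsto (fun n => ratioConst k * signalRatio n k (D n) (m n) (δ n))
        Filter.atTop (nhds 0) := by simpa using hlim.const_mul (ratioConst k)
    have hb : Filter.Tendsto
        (fun n => Real.sqrt (4 * (ratioConst k * signalRatio n k (D n) (m n) (δ n))))
        Filter.atTop (nhds 0) := by
      have h := (hr.const_mul 4).sqrt
      rwa [mul_zero, Real.sqrt_zero] at h
    refine squeeze_zero_norm' ?_ hb
    filter_upwards [hv, Filter.eventually_ge_atTop k,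
      hr.eventually (ge_mem_nhds (show (0 : ℝ) < 1 / 2 by norm_num))] with n hvn hkn hrn
    rw [Real.norm_eq_abs]
    refine (abs_advantage_le (by omega) hkn (hmb n hkn) (f n) (hf n) hvn).trans ?_
    exact Real.sqrt_le_sqrt (sum_Icc_two_mul_pow_le
      (mul_nonneg ratioConst_nonneg signalRatio_nonneg) hrn _)
  · refine ⟨Real.sqrt (∑ d ∈ Finset.Icc 1 D₀, 2 * (ratioConst k * c) ^ d), fun n f hf hv => ?_⟩
    have hkn : k ≤ n := by
      by_contra! h
      exact hv.ne' (varQ_eq_zero_of_lt h _ f)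
    refine (abs_advantage_le (by omega) hkn (hmb n hkn) f hf hv).trans (Real.sqrt_le_sqrt ?_)
    refine Finset.sum_le_sum fun d _ => ?_
    have hu : signalRatio n k D₀ (m n) (δ n) ≤ c := hc n (by omega)
    have := mul_nonneg (ratioConst_nonneg (k := k))
      (signalRatio_nonneg (n := n) (k := k) (D := D₀) (m := m n) (δ := δ n))
    have hA := ratioConst_nonneg (k := k)
    gcongr
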